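/- arXiv:1702.02608 — 4 statements merged into one kernel-verified Lean document; each statement's English description precedes it below -/
import Mathlib

section
/- Let n ≥ 3 be an integer and a > 0 a real number. The function t ↦ 1/√((t/a)^{2n−2} − 1) is integrable on the interval (a, ∞); in particular the improper integral x(a,∞) = ∫_a^∞ dt/√((t/a)^{2n−2} − 1), giving the total horizontal extent of the generating curve of the Euclidean catenoid, is finite. -/
open MeasureTheory Real Set

/-- The function `t ↦ -a * arcsin (a / t)` is an antiderivative of
`t ↦ (a / t)² / √(1 - (a / t)²)` on `(a, ∞)`. -/
lemma hasDerivAt_neg_mul_arcsin_div {a t : ℝ} (ha : 0 < a) (ht : a < t) :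
    HasDerivAt (fun t : ℝ => -a * arcsin (a / t)) ((a / t) ^ 2 / √(1 - (a / t) ^ 2)) t := by
  have ht0 : 0 < t := ha.trans ht
  have h1 : a / t < 1 := (div_lt_one ht0).2 ht
  have h0 : 0 < a / t := div_pos ha ht0
  have hdiv : HasDerivAt (fun t : ℝ => a / t) (-a / t ^ 2) t := by
    exact ((hasDerivAt_const t a).div (hasDerivAt_id t) ht0.ne').congr_deriv (by simp)
  refine (((hasDerivAt_arcsin (by linarith) h1.ne).comp t hdiv).const_mul (-a)).congr_deriv ?_
  ring

lemma integrableOn_Ioi_div_sq_div_sqrt {a : ℝ} (ha : 0 < a) :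
    IntegrableOn (fun t : ℝ => (a / t) ^ 2 / √(1 - (a / t) ^ 2)) (Ioi a) := by
  refine integrableOn_Ioi_deriv_of_nonneg (g := fun t : ℝ => -a * arcsin (a / t))
    (l := -a * arcsin 0) ?_ (fun t ht => hasDerivAt_neg_mul_arcsin_div ha ht)
    (fun t _ => by positivity) ?_
  · have hdiv : ContinuousAt (fun t : ℝ => a / t) a :=
      continuousAt_const.div continuousAt_id ha.ne'
    exact (continuousAt_const.mul
      (continuous_arcsin.continuousAt.comp hdiv)).continuousWithinAt
  · exact ((continuous_arcsin.tendsto 0).comp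
      (Filter.tendsto_id.const_div_atTop a)).const_mul (-a)

lemma one_div_sqrt_pow_sub_one_le {u : ℝ} (hu : 1 < u) {m : ℕ} (hm : 4 ≤ m) :
    1 / √(u ^ m - 1) ≤ u⁻¹ ^ 2 / √(1 - u⁻¹ ^ 2) := by
  have hu0 : 0 < u := one_pos.trans hu
  have hinv : 0 < 1 - u⁻¹ ^ 2 :=
    sub_pos.2 (pow_lt_one₀ (inv_nonneg.2 hu0.le) (inv_lt_one_of_one_lt₀ hu) two_ne_zero)
  have hpow : u ^ 4 ≤ u ^ m := pow_le_pow_right₀ hu.le hm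
  have hle : u ^ 2 * √(1 - u⁻¹ ^ 2) ≤ √(u ^ m - 1) := by
    apply le_sqrt_of_sq_le
    rw [mul_pow, sq_sqrt hinv.le]
    have hexpand : (u ^ 2) ^ 2 * (1 - u⁻¹ ^ 2) = u ^ 4 - u ^ 2 := by field_simp
    rw [hexpand]
    nlinarith
  calc 1 / √(u ^ m - 1) ≤ 1 / (u ^ 2 * √(1 - u⁻¹ ^ 2)) :=
        one_div_le_one_div_of_le (by positivity) hle
    _ = u⁻¹ ^ 2 / √(1 - u⁻¹ ^ 2) := by rw [inv_pow, one_div, mul_inv, div_eq_mul_inv]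

/-- For an integer `n ≥ 3` and a real `a > 0`, the function
`t ↦ 1/√((t/a)^(2n−2) − 1)` is integrable on `(a, ∞)`; in particular the
improper integral giving the total horizontal extent of the generating curve
of the Euclidean catenoid is finite. -/
theorem euclidean_catenoid_integrable (n : ℕ) (hn : 3 ≤ n) (a : ℝ) (ha : 0 < a) :
    IntegrableOn (fun t : ℝ => 1 / Real.sqrt ((t / a) ^ (2 * n - 2) - 1))
      (Set.Ioi a) := by
  refine (integrableOn_Ioi_div_sq_div_sqrt ha).mono'
    (Measurable.aestronglyMeasurable (by fun_prop)) ?_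
  refine (ae_restrict_iff' measurableSet_Ioi).2 (.of_forall fun t ht => ?_)
  rw [norm_of_nonneg (by positivity), ← inv_div t a]
  exact one_div_sqrt_pow_sub_one_le ((one_lt_div ha).2 ht) (by omega)
end

section
/- Let n ≥ 2 be an integer, c ∈ ℝ and a > 0. Let x be a twice-differentiable positive real-valued function on an open interval I ⊆ ℝ satisfying the catenoid profile equations (x′(s))² = 1 − c·x(s)² − a²·x(s)^{2−2n} and x″(s) = −c·x(s) + a²(n−1)·x(s)^{1−2n} for all s ∈ I. Define φ(s) = a·√(n(n−1))·x(s)^{−n}. Then for all s ∈ I the Simons equation holds in the form φ·(φ″ + (n−1)·(x′/x)·φ′) + φ⁴ = (2/n)·(φ′)² + n·c·φ², where φ″ + (n−1)(x′/x)φ′ is the Laplacian of the rotationally invariant function φ on the catenoid. -/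
open Real

/-- Let `n ≥ 2`, `c ∈ ℝ`, `a > 0`, and let `x` be a twice-differentiable
positive function on an open set `I` satisfying the catenoid profile equations
`(x′)² = 1 − c x² − a² x^(2−2n)` and `x″ = −c x + a²(n−1) x^(1−2n)`.
With `φ = a √(n(n−1)) x^(−n)`, the Simons equation
`φ·(φ″ + (n−1)(x′/x)φ′) + φ⁴ = (2/n)(φ′)² + n c φ²` holds on `I`. -/
theorem catenoid_satisfies_simons_equation
    (n : ℕ) (hn : 2 ≤ n) (c : ℝ) (a : ℝ) (ha : 0 < a)
    (I : Set ℝ) (hI : IsOpen I) (hI' : I.OrdConnected)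
    (x x' x'' : ℝ → ℝ)
    (hx_pos : ∀ s ∈ I, 0 < x s)
    (hx' : ∀ s ∈ I, HasDerivAt x (x' s) s)
    (hx'' : ∀ s ∈ I, HasDerivAt x' (x'' s) s)
    (hode1 : ∀ s ∈ I, (x' s) ^ 2 = 1 - c * x s ^ 2 - a ^ 2 * x s ^ ((2 : ℤ) - 2 * n))
    (hode2 : ∀ s ∈ I, x'' s = -c * x s + a ^ 2 * (n - 1) * x s ^ ((1 : ℤ) - 2 * n))
    (φ φ' φ'' : ℝ → ℝ)
    (hφ : ∀ s, φ s = a * Real.sqrt (n * (n - 1)) * x s ^ (-(n : ℤ)))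
    (hφ' : ∀ s ∈ I, HasDerivAt φ (φ' s) s)
    (hφ'' : ∀ s ∈ I, HasDerivAt φ' (φ'' s) s) :
    ∀ s ∈ I,
      φ s * (φ'' s + (n - 1) * (x' s / x s) * φ' s) + φ s ^ 4 =
        (2 / n) * (φ' s) ^ 2 + n * c * φ s ^ 2 := by
  intro s hs
  have hn0 : (n : ℝ) ≠ 0 := by positivity
  have hn1 : (1 : ℝ) ≤ n := by exact_mod_cast (by omega : 1 ≤ n)
  have hφ'_eq : ∀ t ∈ I, φ' t = -n * φ t * (x' t / x t) := by
    intro t ht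
    have hx0 : x t ≠ 0 := (hx_pos t ht).ne'
    have hpow := ((hasDerivAt_zpow (-(n : ℤ)) (x t) (Or.inl hx0)).comp t (hx' t ht)).const_mul
      (a * √(n * (n - 1)))
    have hφ_eq : φ = fun t => a * √(n * (n - 1)) * ((fun y => y ^ (-(n : ℤ))) ∘ x) t :=
      funext hφ
    rw [← hφ_eq] at hpow
    rw [(hφ' t ht).unique hpow, hφ t, zpow_sub_one₀ hx0]
    push_cast
    ring
  have hx0 : x s ≠ 0 := (hx_pos s hs).ne'
  have hφ''_eq : φ'' s = -n * φ' s * (x' s / x s)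
      + -n * φ s * ((x'' s * x s - x' s * x' s) / x s ^ 2) := by
    refine (hφ'' s hs).unique ?_
    have hderiv := ((hφ' s hs).const_mul (-n : ℝ)).mul ((hx'' s hs).div (hx' s hs) hx0)
    refine hderiv.congr_of_eventuallyEq ?_
    filter_upwards [hI.mem_nhds hs] with t ht
    exact hφ'_eq t ht
  have hφ_sq : φ s ^ 2 = n * (c + x'' s / x s) := by
    have hsplit : x s ^ ((1 : ℤ) - 2 * n) = x s * (x s ^ (-(n : ℤ))) ^ 2 := by
      rw [← zpow_natCast, ← zpow_mul, ← zpow_one_add₀ hx0]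
      congr 1
      push_cast
      ring
    rw [hφ s, hode2 s hs, hsplit, mul_pow, mul_pow,
      Real.sq_sqrt (mul_nonneg n.cast_nonneg (sub_nonneg.2 hn1))]
    field_simp
    ring
  have hφ_four : φ s ^ 4 = φ s ^ 2 * (n * (c + x'' s / x s)) := by
    rw [← hφ_sq]
    ring
  rw [hφ_four, hφ''_eq, hφ'_eq s hs]
  field_simp
  ring
end

section
/- Let n ≥ 2 be an integer and let h be a twice-differentiable real-valued function on an open interval I ⊆ ℝ with 0 < h(θ) < 1 for all θ ∈ I, satisfying the Otsuki equation n·h·(1 − h²)·h″ + (h′)² + (1 − h²)·(n·h² − 1) = 0 on I. Then the function θ ↦ (1 − h(θ)² − h′(θ)²)^n · h(θ)² / (1 − h(θ)²) is constant on I. -/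
open Real

/-- For a twice-differentiable solution `h` of the Otsuki equation
`n h(1−h²)h″ + (h′)² + (1−h²)(nh²−1) = 0` with `0 < h < 1` on an open interval,
the quantity `(1 − h² − h′²)^n · h²/(1 − h²)` is a first integral: it is
constant on the interval. -/
theorem otsuki_first_integral
    (n : ℕ) (hn : 2 ≤ n)
    (I : Set ℝ) (hI : IsOpen I) (hI' : I.OrdConnected)
    (h h' h'' : ℝ → ℝ)
    (hh_pos : ∀ θ ∈ I, 0 < h θ) (hh_lt : ∀ θ ∈ I, h θ < 1)
    (hd1 : ∀ θ ∈ I, HasDerivAt h (h' θ) θ)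
    (hd2 : ∀ θ ∈ I, HasDerivAt h' (h'' θ) θ)
    (hode : ∀ θ ∈ I,
      n * h θ * (1 - h θ ^ 2) * h'' θ + (h' θ) ^ 2 +
        (1 - h θ ^ 2) * (n * h θ ^ 2 - 1) = 0) :
    ∃ K : ℝ, ∀ θ ∈ I,
      (1 - h θ ^ 2 - (h' θ) ^ 2) ^ n * h θ ^ 2 / (1 - h θ ^ 2) = K := by
  obtain ⟨m, rfl⟩ : ∃ m, n = m + 1 := ⟨n - 1, by lia⟩
  have first_integral_deriv : ∀ θ ∈ I, HasDerivAt
      (fun θ => (1 - h θ ^ 2 - (h' θ) ^ 2) ^ (m + 1) * h θ ^ 2 / (1 - h θ ^ 2)) 0 θ := by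
    intro θ hθ
    have h_pos := hh_pos θ hθ
    have one_sub_sq_ne : 1 - h θ ^ 2 ≠ 0 := by nlinarith [hh_lt θ hθ]
    have sq_deriv := (hd1 θ hθ).fun_pow 2
    have one_sub_sq_deriv := sq_deriv.const_sub 1
    have energy_deriv := one_sub_sq_deriv.fun_sub ((hd2 θ hθ).fun_pow 2)
    refine (((energy_deriv.fun_pow (m + 1)).fun_mul sq_deriv).fun_div
      one_sub_sq_deriv one_sub_sq_ne).congr_deriv ?_
    rw [div_eq_zero_iff]
    left
    have ode := hode θ hθ
    push_cast at ode ⊢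
    linear_combination (-2 * h θ * h' θ * (1 - h θ ^ 2 - h' θ ^ 2) ^ m) * ode
  exact hI.exists_is_const_of_deriv_eq_zero hI'.isPreconnected
    (fun θ hθ => (first_integral_deriv θ hθ).differentiableAt.differentiableWithinAt)
    (fun θ hθ => (first_integral_deriv θ hθ).deriv)
end

section
/- Let n ≥ 2 be an integer and 0 < a < 1/√n, and set C(a) = a^{2/n}(1 − a²)^{1 − 1/n}. Let h be a twice-differentiable real-valued function on an open interval I ⊆ ℝ containing 0, with 0 < h < 1 on I, satisfying the Otsuki equation n·h·(1 − h²)·h″ + (h′)² + (1 − h²)·(n·h² − 1) = 0 on I together with the initial conditions h(0) = a and h′(0) = 0. Then for all θ ∈ I: h′(θ)² = 1 − h(θ)² − C(a)·((1 − h(θ)²)/h(θ)²)^{1/n}. -/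
open Real

/-- The first integral `(1 - h² - h'²) (h² / (1 - h²))^(1/n)` of the Otsuki equation has zero
derivative along solutions. -/
theorem hasDerivAt_otsuki_first_integral {n : ℝ} (hn : n ≠ 0) {h h' : ℝ → ℝ} {k θ : ℝ}
    (hpos : 0 < h θ) (hlt : h θ < 1) (hd1 : HasDerivAt h (h' θ) θ) (hd2 : HasDerivAt h' k θ)
    (hode : n * h θ * (1 - h θ ^ 2) * k + (h' θ) ^ 2 +
      (1 - h θ ^ 2) * (n * h θ ^ 2 - 1) = 0) :
    HasDerivAt (fun t => (1 - h t ^ 2 - h' t ^ 2) * (h t ^ 2 / (1 - h t ^ 2)) ^ (1 / n)) 0 θ := by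
  have hs : 0 < 1 - h θ ^ 2 := by nlinarith
  have hW : 0 < h θ ^ 2 / (1 - h θ ^ 2) := by positivity
  have hsq : HasDerivAt (fun t => 1 - h t ^ 2) (-(2 * h θ * h' θ)) θ := by
    simpa using (hd1.fun_pow 2).const_sub 1
  have hU : HasDerivAt (fun t => 1 - h t ^ 2 - h' t ^ 2)
      (-(2 * h θ * h' θ) - 2 * h' θ * k) θ := by
    simpa using hsq.fun_sub (hd2.fun_pow 2)
  have hQ := (((hd1.fun_pow 2).fun_div hsq hs.ne').rpow_const (p := 1 / n) (Or.inl hW.ne'))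
  refine (hU.fun_mul hQ).congr_deriv ?_
  have hk : k = -((h' θ) ^ 2 + (1 - h θ ^ 2) * (n * h θ ^ 2 - 1)) /
      (n * h θ * (1 - h θ ^ 2)) := by
    rw [eq_div_iff (by positivity)]
    linarith
  rw [Real.rpow_sub_one hW.ne', hk]
  generalize (h θ ^ 2 / (1 - h θ ^ 2)) ^ (1 / n) = P
  have hs' := hs.ne'
  field_simp
  push_cast
  ring

/-- Let `n ≥ 2`, `0 < a < 1/√n` and `C(a) = a^(2/n)(1 − a²)^(1 − 1/n)`.
A twice-differentiable solution `h` of the Otsuki equation on an open interval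
containing `0`, with `0 < h < 1`, `h(0) = a` and `h′(0) = 0`, satisfies the
first-order identity `h′² = 1 − h² − C(a)((1 − h²)/h²)^(1/n)`. -/
theorem otsuki_first_order_identity
    (n : ℕ) (hn : 2 ≤ n) (a : ℝ) (ha : 0 < a) (ha' : a < 1 / Real.sqrt n)
    (I : Set ℝ) (hI : IsOpen I) (hI' : I.OrdConnected) (h0I : (0 : ℝ) ∈ I)
    (h h' h'' : ℝ → ℝ)
    (hh_pos : ∀ θ ∈ I, 0 < h θ) (hh_lt : ∀ θ ∈ I, h θ < 1)
    (hd1 : ∀ θ ∈ I, HasDerivAt h (h' θ) θ)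
    (hd2 : ∀ θ ∈ I, HasDerivAt h' (h'' θ) θ)
    (hode : ∀ θ ∈ I,
      n * h θ * (1 - h θ ^ 2) * h'' θ + (h' θ) ^ 2 +
        (1 - h θ ^ 2) * (n * h θ ^ 2 - 1) = 0)
    (hinit : h 0 = a) (hinit' : h' 0 = 0) :
    ∀ θ ∈ I,
      (h' θ) ^ 2 = 1 - h θ ^ 2 -
        a ^ ((2 : ℝ) / n) * (1 - a ^ 2) ^ (1 - 1 / (n : ℝ)) *
          ((1 - h θ ^ 2) / h θ ^ 2) ^ (1 / (n : ℝ)) := by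
  intro θ hθ
  have hn0 : (n : ℝ) ≠ 0 := by positivity
  have hG (t : ℝ) (ht : t ∈ I) := hasDerivAt_otsuki_first_integral hn0
    (hh_pos t ht) (hh_lt t ht) (hd1 t ht) (hd2 t ht) (hode t ht)
  have hconst := hI.is_const_of_deriv_eq_zero hI'.isPreconnected
    (fun t ht => (hG t ht).differentiableAt.differentiableWithinAt)
    (fun t ht => (hG t ht).deriv) hθ h0I
  have ha1 : a < 1 := hinit ▸ hh_lt 0 h0I
  have hsa : 0 < 1 - a ^ 2 := by nlinarith
  have hpos := hh_pos θ hθ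
  have hs : 0 < 1 - h θ ^ 2 := by nlinarith [hh_lt θ hθ]
  have hC : (1 - a ^ 2) * (a ^ 2 / (1 - a ^ 2)) ^ (1 / (n : ℝ)) =
      a ^ ((2 : ℝ) / n) * (1 - a ^ 2) ^ (1 - 1 / (n : ℝ)) := by
    rw [Real.div_rpow (by positivity) hsa.le, ← Real.rpow_natCast_mul ha.le,
      Real.rpow_sub hsa, Real.rpow_one, Nat.cast_ofNat, mul_one_div]
    ring
  have hinv : (h θ ^ 2 / (1 - h θ ^ 2)) ^ (1 / (n : ℝ)) *
      ((1 - h θ ^ 2) / h θ ^ 2) ^ (1 / (n : ℝ)) = 1 := by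
    rw [← Real.mul_rpow (by positivity) (by positivity), div_mul_div_cancel₀ hs.ne',
      div_self (by positivity), Real.one_rpow]
  simp only [hinit, hinit', ne_eq, OfNat.ofNat_ne_zero, not_false_eq_true, zero_pow, sub_zero]
    at hconst
  rw [← hC, ← hconst, mul_assoc, hinv]
  ring
end
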